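/- arXiv:math/9305205 — 2 statements merged into one kernel-verified Lean document; each statement's English description precedes it below -/
import Mathlib

section
/- Let p be a prime, F a free abelian group, F̂ the p-adic completion of F, and A a p-pure subgroup of F̂. Assume there is a finite set Y of elements of A, none of which is divisible by p in F̂, and a subset B ⊆ A with cardinality of B strictly greater than max(|F|, ℵ₀), such that for all x ≠ y in B there exist n ∈ ℕ and a ∈ Y with x − y − pⁿ·a ∈ pⁿ⁺¹·F̂. Then Ext_p(A, ℤ) ≠ 0; that is, there exists a group homomorphism h : A → ℤ/pℤ that has no lifting to ℤ. -/
universe u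

/-!
If every homomorphism `A → ℤ/p` lifted, then each of the finitely many `a ∈ Y` would admit a
`g_a : A → ℤ` with `p ∤ g_a(a)`: separate `a` from `0` in `A/pA` and lift. The map
`(g_a)_a : B → ℤ^Y` has countable target, so it identifies two distinct `x, y ∈ B`. Writing
`x - y = pᵏ a + pᵏ⁺¹ z` with `a ∈ Y`, where `z ∈ A` by purity and torsion-freeness, and applying
`g_a` gives `0 = pᵏ (g_a(a) + p g_a(z))`, contradicting `p ∤ g_a(a)`.
-/

section AdicCompletion

variable {R M : Type*} [CommRing R] [AddCommGroup M] [Module R M]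

lemma mem_span_singleton_pow_smul_top_iff {r : R} {k : ℕ} {x : M} :
    x ∈ (Ideal.span {r} ^ k • ⊤ : Submodule R M) ↔ ∃ y, r ^ k • y = x := by
  simp only [Ideal.span_singleton_pow, Submodule.ideal_span_singleton_smul,
    Submodule.mem_smul_pointwise_iff_exists, Submodule.mem_top, true_and]

lemma isSMulRegular_adicCompletion_span_singleton {r : R} (hr : IsSMulRegular M r) :
    IsSMulRegular (AdicCompletion (Ideal.span {r}) M) r := by
  refine .of_right_eq_zero_of_smul fun x hx ↦ ?_
  obtain ⟨f, rfl⟩ := AdicCompletion.mk_surjective _ _ x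
  refine AdicCompletion.mk_zero_of _ _ f ⟨0, fun k _ ↦ ⟨k + 1, k.le_succ, k, le_rfl, ?_⟩⟩
  have hmem : r • f (k + 1) ∈ (Ideal.span {r} ^ (k + 1) • ⊤ : Submodule R M) :=
    (Submodule.Quotient.mk_eq_zero _).1 (congrArg (fun y ↦ y.val (k + 1)) hx)
  obtain ⟨y, hy⟩ := mem_span_singleton_pow_smul_top_iff.1 hmem
  exact mem_span_singleton_pow_smul_top_iff.2 ⟨y, hr (by simpa only [pow_succ', mul_smul] using hy)⟩

end AdicCompletion

lemma isSMulRegular_adicCompletion_nsmul {M : Type*} [AddCommGroup M] {n : ℕ}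
    (hM : IsSMulRegular M n) : IsSMulRegular (AdicCompletion (Ideal.span {(n : ℤ)}) M) n := by
  have hMint : IsSMulRegular M (n : ℤ) := (isSMulRegular_map _ (Nat.cast_smul_eq_nsmul ℤ n)).2 hM
  exact (isSMulRegular_map _ (Nat.cast_smul_eq_nsmul ℤ n)).1
    (isSMulRegular_adicCompletion_span_singleton hMint)

section Pure

variable {K : Type*} [AddCommGroup K] {n : ℕ} {A : AddSubgroup K}

/-- `n`-purity of a subgroup `A` of `K`, i.e. `A ∩ nK ⊆ nA`. Only `n` itself is considered, not its
powers. -/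
def IsPureAt (n : ℕ) (A : AddSubgroup K) : Prop :=
  ∀ a ∈ A, (∃ x : K, n • x = a) → ∃ b ∈ A, n • b = a

lemma IsPureAt.mem_of_nsmul_mem (hA : IsPureAt n A) (hK : IsSMulRegular K n) {x : K}
    (hx : n • x ∈ A) : x ∈ A := by
  obtain ⟨b, hb, hbx⟩ := hA _ hx ⟨x, rfl⟩
  exact hK hbx ▸ hb

lemma IsPureAt.mem_of_pow_nsmul_mem (hA : IsPureAt n A) (hK : IsSMulRegular K n) (k : ℕ) {x : K}
    (hx : n ^ k • x ∈ A) : x ∈ A := by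
  induction k with
  | zero => simpa only [pow_zero, one_smul] using hx
  | succ k ih => exact ih (hA.mem_of_nsmul_mem hK (by rwa [← mul_smul, ← pow_succ']))

end Pure

section Homs

variable {A : Type*} [AddCommGroup A] {n : ℕ}

-- A character `A → ℚ/ℤ` takes values in the `n`-torsion of `ℚ/ℤ`, which is cyclic of order `n`.
lemma exists_zmod_hom_apply_ne_zero_of_ne_zero (hn : n ≠ 0) (hA : ∀ b : A, n • b = 0) {a : A}
    (ha : a ≠ 0) : ∃ h : A →+ ZMod n, h a ≠ 0 := by
  obtain ⟨c, hc⟩ := CharacterModule.exists_character_apply_ne_zero_of_ne_zero ha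
  let T : AddSubgroup (AddCircle (1 : ℚ)) := .zmultiples ((1 / n : ℚ) : AddCircle (1 : ℚ))
  have hcT (b : A) : c b ∈ T := by
    have hcb : n • c b = 0 := by rw [← map_nsmul, hA, map_zero]
    obtain ⟨m, -, hm⟩ := (AddCircle.nsmul_eq_zero_iff hn.pos).1 hcb
    rw [← hm, AddCircle.natCast_div_mul_eq_nsmul]
    exact AddSubgroup.nsmul_mem_zmultiples _ m
  have hT : Nat.card T = Nat.card (ZMod n) := by
    rw [Nat.card_zmultiples, AddCircle.addOrderOf_period_div hn.pos, Nat.card_zmod]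
  let e : T ≃+ ZMod n := addEquivOfAddCyclicCardEq hT
  refine ⟨e.toAddMonoidHom.comp (AddMonoidHom.codRestrict c T hcT), fun h ↦ hc ?_⟩
  exact congrArg Subtype.val ((map_eq_zero_iff e e.injective).1 h)

lemma exists_zmod_hom_apply_ne_zero (hn : n ≠ 0) {a : A} (ha : ¬ ∃ b, n • b = a) :
    ∃ h : A →+ ZMod n, h a ≠ 0 := by
  have hquot (b : ModN A n) : n • b = 0 := by
    rw [← Nat.cast_smul_eq_nsmul (ZMod n), ZMod.natCast_self, zero_smul]
  have hne : ModN.mkQ n a ≠ 0 := fun h ↦ ha <| by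
    simpa using (Submodule.Quotient.mk_eq_zero _).1 h
  obtain ⟨h, hh⟩ := exists_zmod_hom_apply_ne_zero_of_ne_zero hn hquot hne
  exact ⟨h.comp (ModN.mkQ n), hh⟩

lemma natCast_dvd_apply_of_apply_eq (hn : n ≠ 0) (g : A →+ ℤ) {x y a z : A} {k : ℕ}
    (hxy : x - y - n ^ k • a = n ^ (k + 1) • z) (hg : g x = g y) : (n : ℤ) ∣ g a := by
  have hmul : (n : ℤ) ^ k * g a = (n : ℤ) ^ k * (n * -g z) := by
    have hgxy := congrArg g hxy
    simp only [map_sub, map_nsmul, hg, sub_self, zero_sub, nsmul_eq_mul, Nat.cast_pow] at hgxy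
    linear_combination -hgxy
  exact ⟨_, mul_left_cancel₀ (pow_ne_zero k (Nat.cast_ne_zero.2 hn)) hmul⟩

lemma exists_ne_forall_apply_eq_of_not_countable {α β ι : Type*} [Countable β] [Finite ι]
    {B : Set α} (hB : ¬ B.Countable) (g : ι → α → β) :
    ∃ x ∈ B, ∃ y ∈ B, x ≠ y ∧ ∀ i, g i x = g i y := by
  contrapose! hB
  have hinj : B.InjOn fun x i ↦ g i x := fun x hx y hy hxy ↦ by
    by_contra hne
    obtain ⟨i, hi⟩ := hB x hx y hy hne
    exact hi (congrFun hxy i)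
  exact Set.countable_of_injective_of_countable_image hinj (Set.to_countable _)

lemma exists_zmod_hom_not_liftable (hn : n ≠ 0) {Y B : Set A} (hY : Y.Finite)
    (hYn : ∀ a ∈ Y, ¬ ∃ b, n • b = a) (hB : ¬ B.Countable)
    (hBY : ∀ x ∈ B, ∀ y ∈ B, x ≠ y →
      ∃ k : ℕ, ∃ a ∈ Y, ∃ z, x - y - n ^ k • a = n ^ (k + 1) • z) :
    ∃ h : A →+ ZMod n, ¬ ∃ g : A →+ ℤ, (Int.castAddHom (ZMod n)).comp g = h := by
  by_contra! hlift
  have hsep (a : Y) : ∃ g : A →+ ℤ, ¬ (n : ℤ) ∣ g a := by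
    obtain ⟨h, hh⟩ := exists_zmod_hom_apply_ne_zero hn (hYn a a.2)
    obtain ⟨g, rfl⟩ := hlift h
    exact ⟨g, mt (ZMod.intCast_zmod_eq_zero_iff_dvd _ n).2 hh⟩
  choose g hg using hsep
  have : Finite Y := hY
  obtain ⟨x, hx, y, hy, hne, hgxy⟩ :=
    exists_ne_forall_apply_eq_of_not_countable hB fun a ↦ ⇑(g a)
  obtain ⟨k, a, ha, z, hz⟩ := hBY x hx y hy hne
  exact hg ⟨a, ha⟩ (natCast_dvd_apply_of_apply_eq hn _ hz (hgxy ⟨a, ha⟩))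

end Homs

theorem ext_p_ne_zero_general {n : ℕ} (hn : n ≠ 0) {K : Type*} [AddCommGroup K]
    (hK : IsSMulRegular K n) {A : AddSubgroup K} (hA : IsPureAt n A)
    {Y : Set A} (hY : Y.Finite) (hYn : ∀ a ∈ Y, ¬ ∃ x : K, n • x = a)
    {B : Set A} (hB : ¬ B.Countable)
    (hBY : ∀ x ∈ B, ∀ y ∈ B, x ≠ y → ∃ (k : ℕ) (a : A), a ∈ Y ∧
      ∃ z : K, (x : K) - y - n ^ k • (a : K) = n ^ (k + 1) • z) :
    ∃ h : A →+ ZMod n, ¬ ∃ g : A →+ ℤ, (Int.castAddHom (ZMod n)).comp g = h := by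
  refine exists_zmod_hom_not_liftable hn hY
    (fun a ha ⟨b, hb⟩ ↦ hYn a ha ⟨b, congrArg Subtype.val hb⟩) hB fun x hx y hy hxy ↦ ?_
  obtain ⟨k, a, ha, z, hz⟩ := hBY x hx y hy hxy
  have hzA : z ∈ A := hA.mem_of_pow_nsmul_mem hK (k + 1) (hz ▸ (x - y - n ^ k • a).2)
  exact ⟨k, a, ha, ⟨z, hzA⟩, Subtype.ext hz⟩

/-- Proposition `abs-prop` of the paper: if `A` is a `p`-pure subgroup of the `p`-adic
completion of a free abelian group `F`, `Y` is a finite set of elements of `A` none of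
which is divisible by `p` in the completion, and `B ⊆ A` has cardinality greater than
`max(|F|, ℵ₀)` such that any two distinct elements of `B` differ by an element of `Y`
at the first place they differ, then `Ext_p(A, ℤ) ≠ 0`: some homomorphism
`A → ℤ/pℤ` has no lifting to `ℤ`. -/
theorem ext_p_ne_zero (p : ℕ) (hp : p.Prime)
    (F : Type u) [AddCommGroup F] [Module.Free ℤ F]
    (A : AddSubgroup (AdicCompletion (Ideal.span {(p : ℤ)}) F))
    (hpure : ∀ a ∈ A, (∃ b ∈ A, p • b = a) ↔
      (∃ x : AdicCompletion (Ideal.span {(p : ℤ)}) F, p • x = a))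
    (Y : Set A) (hYfin : Y.Finite)
    (hYnd : ∀ a ∈ Y, ¬ ∃ x : AdicCompletion (Ideal.span {(p : ℤ)}) F,
      p • x = (a : AdicCompletion (Ideal.span {(p : ℤ)}) F))
    (B : Set A)
    (hBcard : max (Cardinal.mk F) Cardinal.aleph0 < Cardinal.mk B)
    (hB : ∀ x ∈ B, ∀ y ∈ B, x ≠ y → ∃ (n : ℕ) (a : A), a ∈ Y ∧
      ∃ z : AdicCompletion (Ideal.span {(p : ℤ)}) F,
        (x : AdicCompletion (Ideal.span {(p : ℤ)}) F) - y - p ^ n • (a : AdicCompletion (Ideal.span {(p : ℤ)}) F) = p ^ (n + 1) • z) :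
    ∃ h : A →+ ZMod p, ¬ ∃ g : A →+ ℤ, (Int.castAddHom (ZMod p)).comp g = h := by
  have : IsAddTorsionFree F := Module.isTorsionFree_int_iff_isAddTorsionFree.1 inferInstance
  exact ext_p_ne_zero_general hp.ne_zero
    (isSMulRegular_adicCompletion_nsmul (.of_ne_zero hp.ne_zero)) (fun a ha ↦ (hpure a ha).2) hYfin
    hYnd (fun h ↦ ((le_max_right _ _).trans_lt hBcard).not_ge h.le_aleph0) hB
end

section
/- Suppose that λ is a cardinal of cofinality ω such that 2^λ = λ⁺, the principle *(λ, ℵ₀) holds, and 2^μ < λ for every infinite cardinal μ < λ. Then there exists a non-free coseparable abelian group; more precisely, there is an abelian group G of cardinality λ⁺ (= 2^λ) such that G is ℵ₁-free, G is not free as a ℤ-module, and for every prime p every group homomorphism h : G → ℤ/pℤ has a lifting to ℤ. -/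
/-- The principle `*(λ, ℵ₀)`: there is a family of `λ⁺` countably infinite subsets of `λ`
such that any `λ` of them can be simultaneously refined, by removing finitely many
elements from each, to a pairwise disjoint family. -/
def StarPrinciple (lam : Cardinal.{0}) : Prop :=
  ∃ S : Ordinal.{0} → Set Ordinal.{0},
    (∀ i : Ordinal.{0}, i < (Order.succ lam).ord →
      S i ⊆ Set.Iio lam.ord ∧ (S i).Countable ∧ (S i).Infinite) ∧
    ∀ I : Set Ordinal.{0}, I ⊆ Set.Iio (Order.succ lam).ord →
      Cardinal.mk I = Cardinal.lift.{1} lam →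
      ∃ S' : Ordinal.{0} → Set Ordinal.{0},
        (∀ i ∈ I, (S i \ S' i).Finite) ∧
        (∀ i ∈ I, ∀ j ∈ I, i ≠ j → Disjoint (S' i) (S' j))

/-!
Call `Y : ℕ → A` a factorial tower over `d` if `Y n = n! • Y (n + 1) + d n` for all `n`. Over `ℤ`,
and over any group of bounded exponent, at most one tower lies over `d`; in a `ℚ`-vector space one
with any prescribed `Y 0` exists.

Fix a `*(λ, ℵ₀)`-sequence `s i` (`i < λ⁺`) in `λ`. The group is generated by `x (a, b)` for
`a, b < λ` and by factorial towers `y i` over the differences `x (s i n, b) - x (s i n, b')`, where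
the columns `(b, b') = z i n` are still to be chosen.

For at most `λ` indices `i`, the principle makes the rows `s i n` with `n ≥ N i` pairwise distinct,
and each equation beyond the cut-offs then eliminates a generator `x` of its own. Hence subgroups of
cardinality at most `λ` are free. The whole group is not free: it has cardinality `λ⁺`, but a
homomorphism to `ℤ` is determined by its values on the `λ` many `x (a, b)`.

A homomorphism `h` to `ℤ/nℤ` lifts as soon as some integral lift `g` of `h ∘ x` has an integral
tower over its differences for every `i`, by uniqueness of towers modulo `n`. List all functions
`t j : λ × λ → ℤ/nℤ` by `j < λ⁺`, using `2 ^ λ = λ⁺`. If `t j` comes from a homomorphism, then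
elimination gives a `g` solving the equations of all `i < j`, with finitely many values in each row.
Choose `z i` by recursion on `i`, so as to serve these `g` for all `j ≤ i` at once: write `j ≤ i` as
an increasing `ω`-union of sets of size `μ < λ`; since `2 ^ μ < λ`, at stage `n` two columns of row
`s i n` agree for all `g` in the `n`-th set. Each `g` then has eventually vanishing differences
along `i ≥ j`, so its towers exist.
-/

universe w

section FreeModules

open Finsupp Submodule Set Function

variable {R ι : Type*} [CommRing R]

theorem linearIndependent_of_leading_ne_zero [NoZeroDivisors R] [LinearOrder ι] {κ : Type*}
    {σ : κ → ι} (hσ : Injective σ) {v : κ → ι →₀ R}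
    (hv : ∀ j, v j ∈ supported R R (Iic (σ j))) (hne : ∀ j, v j (σ j) ≠ 0) :
    LinearIndependent R v := by
  rw [linearIndependent_iff]
  intro l hl
  by_contra hl0
  obtain ⟨j, hj, hmax⟩ := l.support.exists_max_image σ (support_nonempty_iff.2 hl0)
  have hlower : ∀ k ∈ l.support, k ≠ j → (l k • v k) (σ j) = 0 := fun k hk hkj => by
    have hlt : σ k < σ j := (hmax k hk).lt_of_ne (hσ.ne hkj)
    rw [Finsupp.smul_apply, (mem_supported' R (v k)).1 (hv k) _ hlt.not_ge, smul_zero]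
  have hcoord : l j * v j (σ j) = 0 := calc
    l j * v j (σ j) = linearCombination R v l (σ j) := by
      rw [linearCombination_apply, Finsupp.sum, finsetSum_apply,
        Finset.sum_eq_single_of_mem j hj hlower, Finsupp.smul_apply, smul_eq_mul]
    _ = 0 := by rw [hl, Finsupp.zero_apply]
  exact mul_ne_zero (mem_support_iff.1 hj) (hne j) hcoord

theorem exists_mem_forall_apply_dvd [IsPrincipalIdealRing R] {M : Type*} [AddCommGroup M]
    [Module R M] (N : Submodule R M) (f : M →ₗ[R] R) : ∃ c ∈ N, ∀ d ∈ N, f c ∣ f d := by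
  obtain ⟨c, hcN, hc⟩ := IsPrincipal.generator_mem (N.map f)
  refine ⟨c, hcN, fun d hd => ?_⟩
  rw [hc]
  exact (IsPrincipal.mem_iff_generator_dvd _).1 (mem_map_of_mem hd)

theorem exists_mem_support_mem_supported_Iic [LinearOrder ι] {d : ι →₀ R} (hd : d ≠ 0) :
    ∃ i ∈ d.support, d ∈ supported R R (Iic i) :=
  ⟨_, d.support.max'_mem (support_nonempty_iff.2 hd), fun _ => d.support.le_max' _⟩

theorem le_span_of_leading_dvd [LinearOrder ι] [WellFoundedLT ι] {N : Submodule R (ι →₀ R)}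
    {c : ι → ι →₀ R} (hc : ∀ i, c i ∈ N ⊓ supported R R (Iic i))
    (hdvd : ∀ i, ∀ d ∈ N ⊓ supported R R (Iic i), c i i ∣ d i) :
    N ≤ span R (c '' {i | c i i ≠ 0}) := by
  set C := span R (c '' {i | c i i ≠ 0})
  have hstage : ∀ i, N ⊓ supported R R (Iic i) ≤ C := by
    intro i
    induction i using WellFoundedLT.induction with
    | ind i ih =>
    have hvanish : ∀ e ∈ N ⊓ supported R R (Iic i), e i = 0 → e ∈ C := by
      rintro e ⟨heN, he⟩ hei
      rcases eq_or_ne e 0 with rfl | he0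
      · exact zero_mem C
      · obtain ⟨k, hk, hek⟩ := exists_mem_support_mem_supported_Iic he0
        have hki : k ≠ i := by
          rintro rfl
          exact mem_support_iff.1 hk hei
        exact ih k ((he hk).lt_of_ne hki) ⟨heN, hek⟩
    intro d hd
    obtain ⟨r, hr⟩ := hdvd i d hd
    by_cases h0 : c i i = 0
    · exact hvanish d hd (by rw [hr, h0, zero_mul])
    · have hsub : d - r • c i ∈ C :=
        hvanish _ (sub_mem hd (smul_mem _ r (hc i)))
          (by rw [Finsupp.sub_apply, Finsupp.smul_apply, hr, smul_eq_mul, mul_comm, sub_self])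
      have hci : c i ∈ C := subset_span (mem_image_of_mem c h0)
      exact (sub_mem_iff_left _ (smul_mem _ r hci)).1 hsub
  intro d hd
  rcases eq_or_ne d 0 with rfl | hd0
  · exact zero_mem C
  · obtain ⟨i, -, hdi⟩ := exists_mem_support_mem_supported_Iic hd0
    exact hstage i ⟨hd, hdi⟩

variable [IsDomain R] [IsPrincipalIdealRing R]

theorem free_submodule_finsupp (N : Submodule R (ι →₀ R)) : Module.Free R N := by
  obtain ⟨_, _⟩ := exists_wellFoundedLT ι
  choose c hc hdvd using fun i =>
    exists_mem_forall_apply_dvd (N ⊓ supported R R (Iic i)) (lapply i)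
  let B : Set ι := {i | c i i ≠ 0}
  have hli : LinearIndependent R fun i : B => c i :=
    linearIndependent_of_leading_ne_zero Subtype.val_injective (fun i => (hc i).2) fun i => i.2
  have hspan : N = span R (range fun i : B => c i) := by
    rw [← image_eq_range]
    exact (le_span_of_leading_dvd hc hdvd).antisymm
      (span_le.2 (image_subset_iff.2 fun i _ => (hc i).1))
  rw [hspan]
  exact Module.Free.of_basis (Module.Basis.span hli)

theorem free_of_injective {M N : Type*} [AddCommGroup M] [Module R M] [AddCommGroup N]
    [Module R N] [Module.Free R N] (f : M →ₗ[R] N) (hf : Injective f) : Module.Free R M := by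
  let g := (Module.Free.chooseBasis R N).repr.toLinearMap ∘ₗ f
  have hg : Injective g := (LinearEquiv.injective _).comp hf
  have := free_submodule_finsupp (LinearMap.range g)
  exact Module.Free.of_equiv (LinearEquiv.ofInjective g hg).symm

end FreeModules

section Rank

open Cardinal

theorem mk_iUnion_finset_le {ι α : Type w} (T : ι → Finset α) :
    #(⋃ i, (T i : Set α)) ≤ max #ι ℵ₀ := calc
  #(⋃ i, (T i : Set α)) ≤ #ι * ⨆ i, #(T i : Set α) := mk_iUnion_le _
  _ ≤ #ι * ℵ₀ := mul_le_mul_right (ciSup_le' fun _ => (lt_aleph0_of_finite _).le) _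
  _ ≤ max #ι ℵ₀ := by simpa using mul_le_max #ι ℵ₀

theorem iUnion_support_repr_eq_univ {R ι M X : Type*} [CommRing R] [Nontrivial R]
    [AddCommGroup M] [Module R M] (b : Module.Basis ι R M) {s : X → M}
    (hs : ∀ g : Module.Dual R M, (∀ k, g (s k) = 0) → g = 0) :
    ⋃ k, ((b.repr (s k)).support : Set ι) = Set.univ := by
  refine Set.eq_univ_of_forall fun t => ?_
  by_contra ht
  have hcoord : b.coord t = 0 := hs _ fun k => by
    by_contra hk
    exact ht (Set.mem_iUnion.2 ⟨k, Finsupp.mem_support_iff.2 hk⟩)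
  simpa using LinearMap.congr_fun hcoord (b t)

theorem rank_le_of_dual_separated {R : Type*} {M X : Type w} [CommRing R] [Nontrivial R]
    [AddCommGroup M] [Module R M] [Module.Free R M] {s : X → M}
    (hs : ∀ g : Module.Dual R M, (∀ k, g (s k) = 0) → g = 0) :
    Module.rank R M ≤ max #X ℵ₀ := by
  let b := Module.Free.chooseBasis R M
  rw [Module.Free.rank_eq_card_chooseBasisIndex, ← mk_univ, ← iUnion_support_repr_eq_univ b hs]
  exact mk_iUnion_finset_le fun k => (b.repr (s k)).support

end Rank

section FactorialTowers

open Function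
open scoped Nat

variable {A B : Type*} [AddCommGroup A] [AddCommGroup B] {d Y Z : ℕ → A}

/-- A factorial tower over `d` is a solution `Y` of the infinite system
`Y n = n! • Y (n + 1) + d n`, the equations of Shelah-type constructions of `ℵ₁`-free groups. -/
def IsFactorialTower (d Y : ℕ → A) : Prop :=
  ∀ n, Y n = n ! • Y (n + 1) + d n

namespace IsFactorialTower

theorem map (f : A →+ B) (hY : IsFactorialTower d Y) :
    IsFactorialTower (fun n => f (d n)) (fun n => f (Y n)) := fun n => by
  rw [← map_nsmul, ← map_add, ← hY n]

theorem sub (hY : IsFactorialTower d Y) (hZ : IsFactorialTower d Z) :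
    IsFactorialTower 0 (Y - Z) := fun n => by
  simp only [Pi.sub_apply, Pi.zero_apply]
  rw [hY n, hZ n, smul_sub]
  abel

theorem eq_zero_of_forall_nsmul_eq_zero {N : ℕ} (hN : N ≠ 0) (hA : ∀ a : A, N • a = 0)
    (hY : IsFactorialTower 0 Y) : Y = 0 := by
  have hlarge : ∀ n, N ≤ n → Y n = 0 := fun n hn => by
    obtain ⟨c, hc⟩ := Nat.dvd_factorial (Nat.pos_of_ne_zero hN) hn
    rw [hY n, hc, mul_nsmul, hA, smul_zero, Pi.zero_apply, add_zero]
  funext n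
  rcases le_total N n with hn | hn
  · exact hlarge n hn
  · induction hn using Nat.decreasingInduction with
    | self => exact hlarge N le_rfl
    | of_succ n _ ih => rw [hY n, ih]; simp

theorem eq_zero_of_int {Y : ℕ → ℤ} (hY : IsFactorialTower 0 Y) : Y = 0 := by
  funext n
  let N := (Y n).natAbs + 1
  have hmod : IsFactorialTower 0 fun k => Int.castAddHom (ZMod N) (Y k) := fun k => by
    simpa only [Pi.zero_apply, map_zero] using hY.map (Int.castAddHom (ZMod N)) k
  have hzero : (Y n : ZMod N) = 0 :=
    congrFun (hmod.eq_zero_of_forall_nsmul_eq_zero (N := N) (Nat.succ_ne_zero _) fun a => by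
      rw [nsmul_eq_mul, CharP.cast_eq_zero, zero_mul]) n
  exact Int.eq_zero_of_dvd_of_natAbs_lt_natAbs ((ZMod.intCast_zmod_eq_zero_iff_dvd _ N).1 hzero)
    (Nat.lt_succ_self _)

theorem exists_of_tail {N : ℕ} (hY : ∀ n, N ≤ n → Y n = n ! • Y (n + 1) + d n) :
    ∃ Z, IsFactorialTower d Z ∧ ∀ n, N ≤ n → Z n = Y n := by
  induction N generalizing Y with
  | zero => exact ⟨Y, fun n => hY n n.zero_le, fun _ _ => rfl⟩
  | succ N ih =>
    obtain ⟨Z, hZ, hZY⟩ := ih (Y := update Y N (N ! • Y (N + 1) + d N)) fun n hn => by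
      rcases hn.eq_or_lt with rfl | hlt
      · simp
      · rw [update_of_ne hlt.ne', update_of_ne (by omega), hY n hlt]
    exact ⟨Z, hZ, fun n hn => by rw [hZY n (by omega), update_of_ne (by omega)]⟩

theorem exists_of_rat_module {V : Type*} [AddCommGroup V] [Module ℚ V] (d : ℕ → V) (a : V) :
    ∃ Y, IsFactorialTower d Y ∧ Y 0 = a := by
  let Y : ℕ → V := Nat.rec a fun n b => (n ! : ℚ)⁻¹ • (b - d n)
  refine ⟨Y, fun n => ?_, rfl⟩
  change Y n = n ! • (n ! : ℚ)⁻¹ • (Y n - d n) + d n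
  rw [← Nat.cast_smul_eq_nsmul ℚ, smul_inv_smul₀ (by exact_mod_cast n.factorial_ne_zero),
    sub_add_cancel]

end IsFactorialTower

end FactorialTowers

noncomputable section TowerGroups

open Cardinal Finsupp Function Set Submodule
open scoped Nat

variable {X L : Type w} (u v : L → ℕ → X)

/-- The relations saying that each `y i` is a factorial tower over the differences
`x (u i n) - x (v i n)`; the free generator `x k` is indexed by `Sum.inl k` and `y i n` by
`Sum.inr (i, n)`. -/
def towerRelations : AddSubgroup (X ⊕ L × ℕ →₀ ℤ) :=
  AddSubgroup.closure <| range fun q : L × ℕ =>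
    single (Sum.inr q) 1 - (q.2 ! • single (Sum.inr (q.1, q.2 + 1)) 1 +
      (single (Sum.inl (u q.1 q.2)) 1 - single (Sum.inl (v q.1 q.2)) 1))

/-- The abelian group generated by elements `x k` and `y i n` subject to `towerRelations`. -/
abbrev TowerGroup : Type w := (X ⊕ L × ℕ →₀ ℤ) ⧸ towerRelations u v

namespace TowerGroup

/-- The generators attached to the points of `X`. -/
def x (k : X) : TowerGroup u v := (single (Sum.inl k) 1 : X ⊕ L × ℕ →₀ ℤ)

/-- The generators solving the tower equations. -/
def y (i : L) (n : ℕ) : TowerGroup u v := (single (Sum.inr (i, n)) 1 : X ⊕ L × ℕ →₀ ℤ)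

theorem isFactorialTower_y (i : L) :
    IsFactorialTower (fun n => x u v (u i n) - x u v (v i n)) (y u v i) := fun n => by
  have hmem := AddSubgroup.subset_closure (mem_range_self (f := fun q : L × ℕ =>
    (single (Sum.inr q) 1 - (q.2 ! • single (Sum.inr (q.1, q.2 + 1)) 1 +
      (single (Sum.inl (u q.1 q.2)) 1 - single (Sum.inl (v q.1 q.2)) 1)) : X ⊕ L × ℕ →₀ ℤ)) (i, n))
  exact sub_eq_zero.1 ((QuotientAddGroup.eq_zero_iff _).2 hmem)

variable {u v} {A : Type*} [AddCommGroup A]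

theorem towerRelations_le_ker {f : X → A} {Y : L → ℕ → A}
    (hY : ∀ i, IsFactorialTower (fun n => f (u i n) - f (v i n)) (Y i)) :
    towerRelations u v ≤
      (linearCombination ℤ (Sum.elim f (uncurry Y))).toAddMonoidHom.ker := by
  refine (AddSubgroup.closure_le _).2 ?_
  rintro _ ⟨⟨i, n⟩, rfl⟩
  simp only [SetLike.mem_coe, AddMonoidHom.mem_ker, LinearMap.toAddMonoidHom_coe, map_sub,
    map_add, map_nsmul, linearCombination_single, one_smul, Sum.elim_inl, Sum.elim_inr, uncurry]
  exact sub_eq_zero.2 (hY i n)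

/-- The homomorphism with prescribed values `f k` on `x k` and `Y i n` on `y i n`. -/
def lift (f : X → A) (Y : L → ℕ → A)
    (hY : ∀ i, IsFactorialTower (fun n => f (u i n) - f (v i n)) (Y i)) : TowerGroup u v →+ A :=
  QuotientAddGroup.lift _ _ (towerRelations_le_ker hY)

theorem lift_x {f : X → A} {Y : L → ℕ → A} (hY) (k : X) :
    lift (u := u) (v := v) f Y hY (x u v k) = f k := by
  simp [lift, x]

theorem lift_y {f : X → A} {Y : L → ℕ → A} (hY) (i : L) (n : ℕ) :
    lift (u := u) (v := v) f Y hY (y u v i n) = Y i n := by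
  simp [lift, y]

theorem hom_ext_of_tower_unique (hA : ∀ Y : ℕ → A, IsFactorialTower 0 Y → Y = 0)
    {f g : TowerGroup u v →+ A} (hx : ∀ k, f (x u v k) = g (x u v k)) : f = g := by
  have hy : ∀ i n, f (y u v i n) = g (y u v i n) := fun i n => by
    have hf := (isFactorialTower_y u v i).map f
    have hg := (isFactorialTower_y u v i).map g
    simp only [map_sub, hx] at hf hg
    exact sub_eq_zero.1 (congrFun (hA _ (hf.sub hg)) n)
  refine QuotientAddGroup.addMonoidHom_ext _ (Finsupp.addHom_ext' fun t => ?_)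
  rcases t with k | ⟨i, n⟩
  · exact AddMonoidHom.ext_int (hx k)
  · exact AddMonoidHom.ext_int (hy i n)

theorem y_zero_injective : Injective fun i => y u v i 0 := by
  classical
  intro i j hij
  choose Y hY hY0 using fun k : L =>
    IsFactorialTower.exists_of_rat_module (fun _ => 0) (if k = i then (1 : ℚ) else 0)
  let f : TowerGroup u v →+ ℚ := lift 0 Y fun k => by
    simpa only [Pi.zero_apply, sub_self] using hY k
  have hf : ∀ k, f (y u v k 0) = if k = i then 1 else 0 := fun k => (lift_y _ k 0).trans (hY0 k)
  by_contra hne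
  have := (hf i).symm.trans ((congrArg f hij).trans (hf j))
  rw [if_pos rfl, if_neg (Ne.symm hne)] at this
  exact one_ne_zero this

theorem mk_eq [Infinite L] (hX : #X ≤ #L) : #(TowerGroup u v) = #L := by
  refine le_antisymm ?_ (mk_le_of_injective (y_zero_injective (u := u) (v := v)))
  have hgen : #(X ⊕ L × ℕ) = #L := by
    rw [mk_sum, mk_prod, lift_id, lift_id, lift_uzero, mk_nat, lift_aleph0,
      mul_aleph0_eq (aleph0_le_mk L), add_eq_right (aleph0_le_mk L) hX]
  calc #(TowerGroup u v) ≤ #(X ⊕ L × ℕ →₀ ℤ) := mk_le_of_surjective Quotient.mk_surjective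
    _ = #L := by simp [hgen]

/-- The subgroup generated by all `x k` and by the towers `y i` with `i ∈ I`. -/
def stage (u v : L → ℕ → X) (I : Set L) : Submodule ℤ (TowerGroup u v) :=
  span ℤ (range (x u v) ∪ uncurry (y u v) '' I ×ˢ Set.univ)

theorem x_mem_stage (I : Set L) (k : X) : x u v k ∈ stage u v I :=
  subset_span (Or.inl (mem_range_self k))

theorem y_mem_stage {I : Set L} {i : L} (hi : i ∈ I) (n : ℕ) : y u v i n ∈ stage u v I :=
  subset_span (Or.inr ⟨(i, n), ⟨hi, mem_univ n⟩, rfl⟩)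

theorem stage_mono : Monotone (stage u v) := fun _ _ hIJ =>
  span_mono (union_subset_union_right _ (image_mono (prod_mono_left hIJ)))

theorem exists_finset_mem_stage (g : TowerGroup u v) : ∃ T : Finset L, g ∈ stage u v T := by
  classical
  obtain ⟨c, rfl⟩ := QuotientAddGroup.mk_surjective g
  induction c using Finsupp.induction_linear with
  | zero => exact ⟨∅, zero_mem _⟩
  | add a b ha hb =>
    obtain ⟨⟨S, hS⟩, T, hT⟩ := And.intro ha hb
    exact ⟨S ∪ T, add_mem (stage_mono (by simp) hS) (stage_mono (by simp) hT)⟩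
  | single t m =>
    have hmk : ((single t m : X ⊕ L × ℕ →₀ ℤ) : TowerGroup u v) =
        m • ((single t 1 : X ⊕ L × ℕ →₀ ℤ) : TowerGroup u v) := by
      rw [← smul_single_one, QuotientAddGroup.mk_zsmul]
    rw [hmk]
    rcases t with k | ⟨i, n⟩
    · exact ⟨∅, smul_mem _ m (x_mem_stage _ k)⟩
    · exact ⟨{i}, smul_mem _ m (y_mem_stage (by simp) n)⟩

end TowerGroup

end TowerGroups

section TailSeparation

open Finsupp Function Set Submodule
open scoped Nat

variable {X L : Type w} {A : Type*} [AddCommGroup A]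

/-- The positions `(i, n)` with `i ∈ I` lying beyond the cut-off `N i`. -/
def tails (I : Set L) (N : L → ℕ) : Set (L × ℕ) :=
  {q | q.1 ∈ I ∧ N q.1 ≤ q.2}

/-- Beyond the cut-offs `N`, the values of `u` on `I` are pairwise distinct and are not values
of `v`; so each tower equation there contains a generator `x (u i n)` of its own. -/
structure TailSeparated (u v : L → ℕ → X) (I : Set L) (N : L → ℕ) : Prop where
  injOn : InjOn (uncurry u) (tails I N)
  ne : ∀ q ∈ tails I N, ∀ r ∈ tails I N, uncurry u q ≠ uncurry v r

open Classical in
/-- The modification of `w` at the points `u i n` beyond the cut-offs `N` that makes each `Y i`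
satisfy its tower equations there. -/
noncomputable def adjust (u v : L → ℕ → X) (I : Set L) (N : L → ℕ) (w : X → A) (Y : L → ℕ → A) :
    X → A :=
  Function.extend ((tails I N).domRestrict (uncurry u))
    (fun q => Y q.1.1 q.1.2 - q.1.2 ! • Y q.1.1 (q.1.2 + 1) + w (v q.1.1 q.1.2)) w

variable {u v : L → ℕ → X} {I : Set L} {N : L → ℕ}

theorem adjust_of_notMem {k : X} (hk : k ∉ uncurry u '' tails I N) (w : X → A) (Y : L → ℕ → A) :
    adjust u v I N w Y k = w k :=
  extend_apply' _ _ _ fun ⟨q, hq⟩ => hk ⟨q, q.2, hq⟩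

theorem adjust_apply (hu : InjOn (uncurry u) (tails I N)) {i : L} (hi : i ∈ I) {n : ℕ}
    (hn : N i ≤ n) (w : X → A) (Y : L → ℕ → A) :
    adjust u v I N w Y (u i n) = Y i n - n ! • Y i (n + 1) + w (v i n) :=
  hu.injective.extend_apply _ w ⟨(i, n), hi, hn⟩

theorem map_adjust {B : Type*} [AddCommGroup B] (hu : InjOn (uncurry u) (tails I N)) (f : A →+ B)
    {w : X → A} {Y : L → ℕ → A}
    (hY : ∀ i, IsFactorialTower (fun n => f (w (u i n)) - f (w (v i n))) (fun n => f (Y i n)))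
    (k : X) : f (adjust u v I N w Y k) = f (w k) := by
  by_cases hk : k ∈ uncurry u '' tails I N
  · obtain ⟨⟨i, n⟩, ⟨hi : i ∈ I, hn : N i ≤ n⟩, rfl⟩ := hk
    have hstep : f (Y i n) = n ! • f (Y i (n + 1)) + (f (w (u i n)) - f (w (v i n))) := hY i n
    rw [uncurry_apply_pair, adjust_apply hu hi hn, map_add, map_sub, map_nsmul, hstep]
    abel
  · rw [adjust_of_notMem hk]

namespace TailSeparated

theorem notMem_image (h : TailSeparated u v I N) {i : L} (hi : i ∈ I) {n : ℕ} (hn : N i ≤ n) :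
    v i n ∉ uncurry u '' tails I N :=
  fun ⟨q, hq, he⟩ => h.ne q hq (i, n) ⟨hi, hn⟩ he

theorem exists_isFactorialTower_adjust (h : TailSeparated u v I N) (w : X → A) (Y : L → ℕ → A)
    {i : L} (hi : i ∈ I) :
    ∃ Z, IsFactorialTower
      (fun n => adjust u v I N w Y (u i n) - adjust u v I N w Y (v i n)) Z ∧
      ∀ n, N i ≤ n → Z n = Y i n := by
  refine IsFactorialTower.exists_of_tail fun n hn => ?_
  rw [adjust_apply h.injOn hi hn, adjust_of_notMem (h.notMem_image hi hn)]
  abel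

end TailSeparated

open TowerGroup

/-- Indices of the generators forming a basis of `stage u v I`: beyond the cut-offs, `x (u i n)` is
replaced by `y i n`. -/
def stageBasisIndex (u : L → ℕ → X) (I : Set L) (N : L → ℕ) : Set (X ⊕ L × ℕ) :=
  {t | t.elim (· ∉ uncurry u '' tails I N) (· ∈ tails I N)}

/-- The generator `x k` or `y i n` with a given index. -/
noncomputable def generator (u v : L → ℕ → X) : X ⊕ L × ℕ → TowerGroup u v :=
  Sum.elim (x u v) (uncurry (y u v))

theorem exists_hom_generator_eq_single (h : TailSeparated u v I N) :
    ∃ f : TowerGroup u v →+ (X ⊕ L × ℕ →₀ ℚ),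
      ∀ t ∈ stageBasisIndex u I N, f (generator u v t) = single t 1 := by
  let w := adjust u v I N (fun k => single (Sum.inl k) 1)
    fun i n => (single (Sum.inr (i, n)) 1 : X ⊕ L × ℕ →₀ ℚ)
  have htower : ∀ i, ∃ Z, IsFactorialTower (fun n => w (u i n) - w (v i n)) Z ∧
      (i ∈ I → ∀ n, N i ≤ n → Z n = single (Sum.inr (i, n)) 1) := fun i => by
    by_cases hi : i ∈ I
    · obtain ⟨Z, hZ, hZn⟩ := h.exists_isFactorialTower_adjust (A := X ⊕ L × ℕ →₀ ℚ) _ _ hi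
      exact ⟨Z, hZ, fun _ => hZn⟩
    · obtain ⟨Z, hZ, -⟩ :=
        IsFactorialTower.exists_of_rat_module (fun n => w (u i n) - w (v i n)) 0
      exact ⟨Z, hZ, fun hi' => absurd hi' hi⟩
  choose Z hZ hZn using htower
  refine ⟨lift w Z hZ, fun t ht => ?_⟩
  rcases t with k | ⟨i, n⟩
  · exact (lift_x hZ k).trans (adjust_of_notMem ht _ _)
  · exact (lift_y hZ i n).trans (hZn i ht.1 n ht.2)

theorem linearIndependent_generator (h : TailSeparated u v I N) :
    LinearIndependent ℤ fun t : stageBasisIndex u I N => generator u v t := by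
  obtain ⟨f, hf⟩ := exists_hom_generator_eq_single h
  have hsingle : LinearIndependent ℚ
      fun t : stageBasisIndex u I N => (single t.1 1 : X ⊕ L × ℕ →₀ ℚ) :=
    (linearIndependent_single_one ℚ _).comp _ Subtype.val_injective
  have hcomp : f.toIntLinearMap ∘ (fun t : stageBasisIndex u I N => generator u v t) =
      fun t => single t.1 1 := funext fun t => hf t t.2
  refine LinearIndependent.of_comp f.toIntLinearMap ?_
  rw [hcomp]
  exact hsingle.restrict_scalars (by simpa using Int.cast_injective)

theorem span_generator_eq_stage (h : TailSeparated u v I N) :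
    span ℤ (range fun t : stageBasisIndex u I N => generator u v t) = stage u v I := by
  set B := span ℤ (range fun t : stageBasisIndex u I N => generator u v t)
  have hgen : ∀ t ∈ stageBasisIndex u I N, generator u v t ∈ B := fun t ht =>
    subset_span ⟨⟨t, ht⟩, rfl⟩
  have hytail : ∀ i ∈ I, ∀ n, N i ≤ n → y u v i n ∈ B := fun i hi n hn =>
    hgen (Sum.inr (i, n)) ⟨hi, hn⟩
  have hx : ∀ k, x u v k ∈ B := by
    intro k
    by_cases hk : k ∈ uncurry u '' tails I N
    · obtain ⟨⟨i, n⟩, ⟨hi : i ∈ I, hn : N i ≤ n⟩, rfl⟩ := hk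
      have hsolve : x u v (u i n) =
          y u v i n - n ! • y u v i (n + 1) + x u v (v i n) := by
        rw [isFactorialTower_y u v i n]
        dsimp only
        abel
      rw [uncurry_apply_pair, hsolve]
      exact add_mem (sub_mem (hytail i hi n hn) (nsmul_mem (hytail i hi _ (by omega)) _))
        (hgen (Sum.inl (v i n)) (h.notMem_image hi hn))
    · exact hgen (Sum.inl k) hk
  have hy : ∀ i ∈ I, ∀ n, y u v i n ∈ B := by
    intro i hi n
    rcases le_total (N i) n with hn | hn
    · exact hytail i hi n hn
    · induction hn using Nat.decreasingInduction with
      | self => exact hytail i hi _ le_rfl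
      | of_succ n _ ih =>
        rw [isFactorialTower_y u v i n]
        exact add_mem (nsmul_mem ih _) (sub_mem (hx _) (hx _))
  refine le_antisymm (span_le.2 ?_) (span_le.2 (union_subset (range_subset_iff.2 hx) ?_))
  · rintro _ ⟨⟨k | ⟨i, n⟩, ht⟩, rfl⟩
    · exact x_mem_stage I k
    · exact y_mem_stage ht.1 n
  · rintro _ ⟨⟨i, n⟩, ⟨hi, -⟩, rfl⟩
    exact hy i hi n

theorem free_stage (h : TailSeparated u v I N) : Module.Free ℤ (stage u v I) := by
  rw [← span_generator_eq_stage h]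
  exact Module.Free.of_basis (Module.Basis.span (linearIndependent_generator h))

end TailSeparation

section SmallSubgroups

open Cardinal Function Set TowerGroup

variable {X L : Type w} {u v : L → ℕ → X} {κ : Cardinal.{w}}

theorem exists_subset_stage (hκ : ℵ₀ ≤ κ) {S : Set (TowerGroup u v)} (hS : #S ≤ κ) :
    ∃ I : Set L, #I ≤ κ ∧ S ⊆ stage u v I := by
  choose T hT using exists_finset_mem_stage (u := u) (v := v)
  exact ⟨⋃ g : S, T g, (mk_iUnion_finset_le _).trans (max_le hS hκ), fun g hg =>
    stage_mono (subset_iUnion (fun g : S => (T g : Set L)) ⟨g, hg⟩) (hT g)⟩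

theorem free_addSubgroup_of_mk_le (hκ : ℵ₀ ≤ κ)
    (hsep : ∀ I : Set L, #I ≤ κ → ∃ N, TailSeparated u v I N)
    (S : AddSubgroup (TowerGroup u v)) (hS : #S ≤ κ) : Module.Free ℤ S := by
  obtain ⟨I, hI, hSI⟩ := exists_subset_stage hκ hS
  obtain ⟨N, hN⟩ := hsep I hI
  have := free_stage hN
  have hle : AddSubgroup.toIntSubmodule S ≤ stage u v I := hSI
  exact free_of_injective (Submodule.inclusion hle) (Submodule.inclusion_injective hle)

theorem not_free_towerGroup (hX : #X < #L) (hL : ℵ₀ < #L) : ¬ Module.Free ℤ (TowerGroup u v) := by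
  intro hfree
  have : Infinite L := infinite_iff.2 hL.le
  have hcard : #(TowerGroup u v) = #L := mk_eq hX.le
  have hrank : Module.rank ℤ (TowerGroup u v) = #L :=
    hcard ▸ Module.Free.rank_eq_mk_of_infinite_lt ℤ _ (by simpa [hcard] using hL)
  have hle : Module.rank ℤ (TowerGroup u v) ≤ max #X ℵ₀ :=
    rank_le_of_dual_separated (s := x u v) fun g hg => by
      have hzero : g.toAddMonoidHom = 0 :=
        hom_ext_of_tower_unique (fun _ => IsFactorialTower.eq_zero_of_int) hg
      exact LinearMap.toAddMonoidHom_injective hzero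
  exact (hrank ▸ hle).not_gt (max_lt hX hL)

end SmallSubgroups

section StarSequences

open Cardinal Function Set

theorem exists_superset_mk_eq {α : Type*} {κ : Cardinal} (hκ : ℵ₀ ≤ κ) (hα : κ ≤ #α) {I : Set α}
    (hI : #I ≤ κ) : ∃ J, I ⊆ J ∧ #J = κ := by
  obtain ⟨P, hP⟩ := le_mk_iff_exists_set.1 hα
  refine ⟨I ∪ P, subset_union_left, le_antisymm ?_ ?_⟩
  · exact (mk_union_le I P).trans (add_le_of_le hκ hI hP.le)
  · exact hP.symm.le.trans (mk_le_mk_of_subset subset_union_right)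

theorem exists_forall_ge_mem_of_finite_diff {α : Type*} {S S' : Set α} {f : ℕ → α}
    (hf : Injective f) (hfS : ∀ n, f n ∈ S) (hfin : (S \ S').Finite) :
    ∃ N, ∀ n, N ≤ n → f n ∈ S' := by
  have hev := hf.tendsto_cofinite.eventually hfin.compl_mem_cofinite
  rw [Nat.cofinite_eq_atTop] at hev
  refine Filter.eventually_atTop.1 (hev.mono fun n hn => ?_)
  by_contra hn'
  exact hn ⟨hfS n, hn'⟩

theorem StarPrinciple.exists_almost_disjoint {lam : Cardinal.{0}} (hstar : StarPrinciple lam)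
    (hlam : ℵ₀ ≤ lam) {K L : Type} (hK : #K = lam) (hL : #L = Order.succ lam) :
    ∃ S : L → Set K, (∀ i, (S i).Infinite) ∧ ∀ I : Set L, #I ≤ lam →
      ∃ S' : L → Set K, (∀ i ∈ I, (S i \ S' i).Finite) ∧ I.PairwiseDisjoint S' := by
  obtain ⟨S, hS, hrefine⟩ := hstar
  obtain ⟨eK⟩ : Nonempty (K ≃ Iio lam.ord) := lift_mk_eq'.1 (by simp [mk_Iio_ordinal, hK])
  obtain ⟨eL⟩ : Nonempty (L ≃ Iio (Order.succ lam).ord) :=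
    lift_mk_eq'.1 (by simp [mk_Iio_ordinal, hL])
  let toOrdK : K → Ordinal := fun k => eK k
  let toOrdL : L → Ordinal := fun i => eL i
  have hKinj : Injective toOrdK := Subtype.val_injective.comp eK.injective
  have hLinj : Injective toOrdL := Subtype.val_injective.comp eL.injective
  have hKrange : range toOrdK = Iio lam.ord :=
    (eK.surjective.range_comp _).trans Subtype.range_val
  refine ⟨fun i => toOrdK ⁻¹' S (toOrdL i), fun i => ?_, fun I hI => ?_⟩
  · obtain ⟨hsub, -, hinf⟩ := hS (toOrdL i) (eL i).2
    exact hinf.preimage (hKrange ▸ hsub)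
  · obtain ⟨J, hIJ, hJ⟩ := exists_superset_mk_eq hlam (hL ▸ Order.le_succ lam) hI
    have hcard : #(toOrdL '' J) = lift.{1} lam := by
      simpa [hJ] using mk_image_eq_lift toOrdL J hLinj
    obtain ⟨S', hfin, hdisj⟩ := hrefine _ (image_subset_iff.2 fun i _ => (eL i).2) hcard
    exact ⟨fun i => toOrdK ⁻¹' S' (toOrdL i),
      fun i hi => Finite.preimage (f := toOrdK) hKinj.injOn (hfin _ (mem_image_of_mem _ (hIJ hi))),
      fun i hi j hj hij => (hdisj _ (mem_image_of_mem _ (hIJ hi)) _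
        (mem_image_of_mem _ (hIJ hj)) (hLinj.ne hij)).preimage toOrdK⟩

theorem exists_injOn_tails {K L : Type*} {s : L → ℕ → K} (hs : ∀ i, Injective (s i)) {I : Set L}
    {S' : L → Set K} (hfin : ∀ i ∈ I, (range (s i) \ S' i).Finite) (hdisj : I.PairwiseDisjoint S') :
    ∃ N, InjOn (uncurry s) (tails I N) := by
  have htail : ∀ i, ∃ N, i ∈ I → ∀ n, N ≤ n → s i n ∈ S' i := fun i => by
    by_cases hi : i ∈ I
    · obtain ⟨N, hN⟩ := exists_forall_ge_mem_of_finite_diff (hs i) mem_range_self (hfin i hi)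
      exact ⟨N, fun _ => hN⟩
    · exact ⟨0, fun hi' => absurd hi' hi⟩
  choose N hN using htail
  refine ⟨N, ?_⟩
  rintro ⟨i, n⟩ ⟨hi : i ∈ I, hn : N i ≤ n⟩ ⟨j, m⟩ ⟨hj : j ∈ I, hm : N j ≤ m⟩ (h : s i n = s j m)
  obtain rfl : i = j := hdisj.elim_set hi hj (s i n) (hN i hi n hn) (h ▸ hN j hj m hm)
  rw [hs i h]

theorem StarPrinciple.exists_seq {lam : Cardinal.{0}} (hstar : StarPrinciple lam)
    (hlam : ℵ₀ ≤ lam) {K L : Type} (hK : #K = lam) (hL : #L = Order.succ lam) :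
    ∃ s : L → ℕ → K, ∀ I : Set L, #I ≤ lam → ∃ N, InjOn (uncurry s) (tails I N) := by
  obtain ⟨S, hinf, hrefine⟩ := hstar.exists_almost_disjoint hlam hK hL
  let f : ∀ i, ℕ ↪ S i := fun i => (hinf i).natEmbedding
  refine ⟨fun i n => f i n, fun I hI => ?_⟩
  obtain ⟨S', hfin, hdisj⟩ := hrefine I hI
  exact exists_injOn_tails (fun i => Subtype.val_injective.comp (f i).injective)
    (fun i hi => (hfin i hi).subset
      (sdiff_subset_sdiff_left (range_subset_iff.2 fun n => (f i n).2))) hdisj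

end StarSequences

section Pigeonhole

open Cardinal Filter Function Set

variable {lam : Cardinal.{w}}

theorem exists_filtration_of_cof_eq_aleph0 (hcof : lam.ord.cof = ℵ₀) {J : Type w}
    (hJ : #J ≤ lam) :
    ∃ A : ℕ → Set J, (∀ n, #(A n) < lam) ∧ ∀ j, ∀ᶠ n in atTop, j ∈ A n := by
  have hlam : ℵ₀ ≤ lam := hcof ▸ Ordinal.cof_ord_le lam
  obtain ⟨t, ht, htcard⟩ := Order.exists_cof_eq lam.ord.ToType
  rw [Ordinal.cof_toType, hcof] at htcard
  obtain ⟨e⟩ : Nonempty (ℕ ≃ t) := lift_mk_eq'.1 (by simp [htcard])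
  obtain ⟨r⟩ : Nonempty (J ↪ lam.ord.ToType) := (Cardinal.le_def _ _).1 (by simpa using hJ)
  let c : ℕ →o lam.ord.ToType := partialSups fun n => (e n : lam.ord.ToType)
  refine ⟨fun n => r ⁻¹' Iic (c n), fun n => ?_, fun j => ?_⟩
  · calc #(r ⁻¹' Iic (c n)) ≤ #(Iic (c n)) := mk_preimage_of_injective _ _ r.injective
      _ < #lam.ord.ToType := mk_Iic_lt _ (by simp) (by simpa using hlam)
      _ = lam := by simp
  · obtain ⟨k, hk, hjk⟩ := ht (r j)
    obtain ⟨m, hm⟩ := e.surjective ⟨k, hk⟩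
    filter_upwards [eventually_ge_atTop m] with n hn
    calc r j ≤ e m := by rwa [hm]
      _ ≤ c m := le_partialSups (fun n => (e n : lam.ord.ToType)) m
      _ ≤ c n := c.monotone hn

theorem exists_ne_forall_eq (hlam : ℵ₀ ≤ lam) (hsmall : ∀ μ, ℵ₀ ≤ μ → μ < lam → 2 ^ μ < lam)
    {J K : Type w} (hJ : #J < lam) (hK : lam ≤ #K) {g : J → K → ℤ}
    (hg : ∀ j, (range (g j)).Finite) : ∃ a b, a ≠ b ∧ ∀ j, g j a = g j b := by
  by_contra! hne
  have hinj : Injective fun k j => g j k := fun a b hab => by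
    by_contra hab'
    obtain ⟨j, hj⟩ := hne a b hab'
    exact hj (congrFun hab j)
  rcases finite_or_infinite J with hfin | hinf
  · have hrange : (range fun k j => g j k).Finite := (Finite.pi hg).subset <|
      range_subset_iff.2 fun k j _ => mem_range_self k
    have := hrange.to_subtype
    have : Finite K := Finite.of_injective_finite_range hinj
    exact (hlam.trans hK).not_gt (lt_aleph0_of_finite K)
  · have hle : #K ≤ 2 ^ #J := calc
      #K ≤ #(J → ℤ) := mk_le_of_injective hinj
      _ = 2 ^ #J := by
        simpa using power_eq_two_power (aleph0_le_mk J) ofNat_le_aleph0 (aleph0_le_mk J)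
    exact ((hsmall _ (aleph0_le_mk J) hJ).trans_le hK).not_ge hle

theorem exists_seq_eventually_eq (hcof : lam.ord.cof = ℵ₀)
    (hsmall : ∀ μ, ℵ₀ ≤ μ → μ < lam → 2 ^ μ < lam) {J K : Type w} (hJ : #J ≤ lam) (hK : lam ≤ #K)
    {g : ℕ → J → K → ℤ} (hg : ∀ n j, (range (g n j)).Finite) :
    ∃ z : ℕ → K × K, (∀ n, (z n).1 ≠ (z n).2) ∧
      ∀ j, ∀ᶠ n in atTop, g n j (z n).1 = g n j (z n).2 := by
  have hlam : ℵ₀ ≤ lam := hcof ▸ Ordinal.cof_ord_le lam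
  obtain ⟨A, hA, hmem⟩ := exists_filtration_of_cof_eq_aleph0 hcof hJ
  choose a b hne heq using fun n =>
    exists_ne_forall_eq hlam hsmall (hA n) hK fun j : A n => hg n j
  exact ⟨fun n => (a n, b n), hne, fun j => (hmem j).mono fun n hn => heq n ⟨j, hn⟩⟩

end Pigeonhole

section LiftingConstruction

open Cardinal Filter Function Set TowerGroup

theorem exists_forall_of_forall_Iio {L Z : Type*} [Preorder L] [WellFoundedLT L]
    {Q : ∀ i : L, (Iio i → Z) → Z → Prop} (hQ : ∀ i f, ∃ y, Q i f y) :
    ∃ z : L → Z, ∀ i, Q i (fun j => z j) (z i) := by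
  choose next hnext using hQ
  let z : L → Z := wellFounded_lt.fix fun i rec => next i fun j => rec j j.2
  have hz : ∀ i, z i = next i fun j => z j := WellFounded.fix_eq _ _
  refine ⟨z, fun i => ?_⟩
  rw [hz i]
  exact hnext i _

variable {K L : Type w}

/-- The index of the generator occurring positively in the `n`-th tower equation of `i`: row
`s i n`, first of the two columns `z i n`. -/
def posIndex (s : L → ℕ → K) (z : L → ℕ → K × K) (i : L) (n : ℕ) : K × K :=
  (s i n, (z i n).1)

/-- The index of the generator occurring negatively in the `n`-th tower equation of `i`: row
`s i n`, second of the two columns `z i n`. -/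
def negIndex (s : L → ℕ → K) (z : L → ℕ → K × K) (i : L) (n : ℕ) : K × K :=
  (s i n, (z i n).2)

/-- `g` lifts `t` modulo `n` to integers so that the tower equations given by `s` and `z` are
solvable; each row of `g` takes finitely many values, so that the pigeonhole principle can later
find columns on which `g` agrees. -/
structure IsIntegralLift (s : L → ℕ → K) (z : L → ℕ → K × K) {n : ℕ} (t : K × K → ZMod n)
    (g : K × K → ℤ) : Prop where
  finite_range_row : ∀ a, (range fun b => g (a, b)).Finite
  cast_eq : ∀ k, (g k : ZMod n) = t k
  exists_tower : ∀ i, ∃ Y,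
    IsFactorialTower (fun m => g (posIndex s z i m) - g (negIndex s z i m)) Y

variable {s : L → ℕ → K} {z : L → ℕ → K × K} {I : Set L} {N : L → ℕ} {n : ℕ}

theorem tailSeparated_posIndex_negIndex (hs : InjOn (uncurry s) (tails I N))
    (hz : ∀ i m, (z i m).1 ≠ (z i m).2) :
    TailSeparated (posIndex s z) (negIndex s z) I N where
  injOn _ hq _ hr h := hs hq hr (congrArg Prod.fst h)
  ne q hq r hr h := by
    obtain rfl : q = r := hs hq hr (congrArg Prod.fst h)
    exact hz _ _ (congrArg Prod.snd h)

theorem finite_range_row_adjust {A : Type*} [AddCommGroup A] (hs : InjOn (uncurry s) (tails I N))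
    {w : K × K → A} (hw : (range w).Finite) (Y : L → ℕ → A) (a : K) :
    (range fun b => adjust (posIndex s z) (negIndex s z) I N w Y (a, b)).Finite := by
  let modified : Set K := {b | (a, b) ∈ uncurry (posIndex s z) '' tails I N}
  have hmodified : modified.Subsingleton := by
    rintro b ⟨q, hq, hqb⟩ b' ⟨r, hr, hrb⟩
    obtain rfl : q = r :=
      hs hq hr ((congrArg Prod.fst hqb).trans (congrArg Prod.fst hrb).symm)
    exact congrArg Prod.snd (hqb.symm.trans hrb)
  refine (hw.union (hmodified.finite.image
    fun b => adjust (posIndex s z) (negIndex s z) I N w Y (a, b))).subset ?_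
  rintro _ ⟨b, rfl⟩
  by_cases hb : b ∈ modified
  · exact Or.inr (mem_image_of_mem _ hb)
  · exact Or.inl ⟨(a, b), (adjust_of_notMem hb w Y).symm⟩

namespace IsIntegralLift

theorem of_restrict_Iio [LinearOrder L] {j : L} {t : K × K → ZMod n} {g : K × K → ℤ}
    (hg : IsIntegralLift (fun i : Iio j => s i) (fun i : Iio j => z i) t g)
    (hlate : ∀ i, j ≤ i → ∀ᶠ m in atTop, g (posIndex s z i m) = g (negIndex s z i m)) :
    IsIntegralLift s z t g where
  finite_range_row := hg.finite_range_row
  cast_eq := hg.cast_eq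
  exists_tower i := by
    rcases lt_or_ge i j with hij | hij
    · exact hg.exists_tower ⟨i, hij⟩
    · obtain ⟨N, hN⟩ := eventually_atTop.1 (hlate i hij)
      obtain ⟨Y, hY, -⟩ := IsFactorialTower.exists_of_tail (N := N) (Y := 0)
        (d := fun m => g (posIndex s z i m) - g (negIndex s z i m)) fun m hm => by
          simp [hN m hm]
      exact ⟨Y, hY⟩

theorem exists_of_injOn_tails [NeZero n] (hs : InjOn (uncurry s) (tails I N))
    (hz : ∀ i m, (z i m).1 ≠ (z i m).2)
    (h : TowerGroup (posIndex s z) (negIndex s z) →+ ZMod n) :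
    ∃ g, IsIntegralLift (fun i : I => s i) (fun i : I => z i) (fun k => h (x _ _ k)) g := by
  let w : K × K → ℤ := fun k => ((h (x _ _ k)).val : ℤ)
  let Y : L → ℕ → ℤ := fun i m => ((h (y _ _ i m)).val : ℤ)
  have hsep := tailSeparated_posIndex_negIndex hs hz
  have hw : (range w).Finite :=
    (finite_range fun c : ZMod n => (c.val : ℤ)).subset
      (range_comp_subset_range (fun k => h (x _ _ k)) fun c : ZMod n => (c.val : ℤ))
  refine ⟨adjust (posIndex s z) (negIndex s z) I N w Y, finite_range_row_adjust hs hw Y,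
    fun k => ?_, fun i => ?_⟩
  · have hY : ∀ i, IsFactorialTower
        (fun m => Int.castAddHom (ZMod n) (w (posIndex s z i m)) -
          Int.castAddHom (ZMod n) (w (negIndex s z i m)))
        (fun m => Int.castAddHom (ZMod n) (Y i m)) := fun i => by
      simpa [w, Y] using (isFactorialTower_y (posIndex s z) (negIndex s z) i).map h
    simpa [w] using map_adjust hsep.injOn (Int.castAddHom (ZMod n)) hY k
  · obtain ⟨Z, hZ, -⟩ := hsep.exists_isFactorialTower_adjust w Y i.2
    exact ⟨Z, hZ⟩

theorem exists_comp_eq [NeZero n] {h : TowerGroup (posIndex s z) (negIndex s z) →+ ZMod n}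
    {g : K × K → ℤ} (hg : IsIntegralLift s z (fun k => h (x _ _ k)) g) :
    ∃ f : TowerGroup (posIndex s z) (negIndex s z) →+ ℤ, (Int.castAddHom (ZMod n)).comp f = h := by
  choose Y hY using hg.exists_tower
  refine ⟨lift g Y hY, hom_ext_of_tower_unique (fun Z hZ => ?_) fun k => ?_⟩
  · exact hZ.eq_zero_of_forall_nsmul_eq_zero (NeZero.ne n) fun c => by simp
  · simpa [lift_x] using hg.cast_eq k

end IsIntegralLift

theorem exists_columns_extending_lifts {lam : Cardinal.{w}} (hcof : lam.ord.cof = ℵ₀)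
    (hsmall : ∀ μ, ℵ₀ ≤ μ → μ < lam → 2 ^ μ < lam) (hK : lam ≤ #K) [LinearOrder L]
    [WellFoundedLT L] (hL : ∀ i : L, #(Iic i) ≤ lam) (s : L → ℕ → K)
    (t : L → Σ n : ℕ, K × K → ZMod n) :
    ∃ z : L → ℕ → K × K, (∀ i m, (z i m).1 ≠ (z i m).2) ∧ ∀ j,
      (∃ g, IsIntegralLift (fun i : Iio j => s i) (fun i : Iio j => z i) (t j).2 g) →
        ∃ g, IsIntegralLift s z (t j).2 g := by
  have hcand : ∀ j (z' : Iio j → ℕ → K × K), ∃ c : K × K → ℤ,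
      (∀ a, (range fun b => c (a, b)).Finite) ∧
      ((∃ g, IsIntegralLift (fun i : Iio j => s i) z' (t j).2 g) →
        IsIntegralLift (fun i : Iio j => s i) z' (t j).2 c) := fun j z' => by
    by_cases hex : ∃ g, IsIntegralLift (fun i : Iio j => s i) z' (t j).2 g
    · obtain ⟨g, hg⟩ := hex
      exact ⟨g, hg.finite_range_row, fun _ => hg⟩
    · exact ⟨0, fun _ => finite_range_const, fun h => absurd h hex⟩
  choose c hcfin hc using hcand
  obtain ⟨z, hz⟩ := exists_forall_of_forall_Iio (L := L) (Z := ℕ → K × K)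
    (Q := fun i z' y => (∀ m, (y m).1 ≠ (y m).2) ∧ ∀ j : Iic i, ∀ᶠ m in atTop,
      c j (fun k => z' ⟨k, k.2.trans_le j.2⟩) (s i m, (y m).1) =
        c j (fun k => z' ⟨k, k.2.trans_le j.2⟩) (s i m, (y m).2))
    fun i z' => exists_seq_eventually_eq hcof hsmall (hL i) hK
      (g := fun m j b => c j (fun k => z' ⟨k, k.2.trans_le j.2⟩) (s i m, b))
      fun m j => hcfin _ _ _
  exact ⟨z, fun i => (hz i).1, fun j hj =>
    ⟨c j fun i => z i, (hc j _ hj).of_restrict_Iio fun i hij => (hz i).2 ⟨j, hij⟩⟩⟩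

theorem exists_surjective_sigma_zmod {X L : Type w} (hX : ℵ₀ ≤ #X) (hL : 2 ^ #X ≤ #L) :
    ∃ t : L → Σ n : ℕ, X → ZMod n, Surjective t := by
  have hmk : #(ℕ × (X → ℤ)) ≤ #L := by
    have hfun : #(X → ℤ) = 2 ^ #X := by
      simpa using power_eq_two_power hX ofNat_le_aleph0 hX
    rw [mk_prod, mk_nat, lift_aleph0, lift_uzero, hfun]
    exact (mul_le_of_le (hX.trans (cantor _).le) (hX.trans (cantor _).le) le_rfl).trans hL
  obtain ⟨r⟩ := hmk
  let reduce : ℕ × (X → ℤ) → Σ n : ℕ, X → ZMod n := fun q => ⟨q.1, fun k => (q.2 k : ZMod q.1)⟩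
  have hreduce : Surjective reduce := fun ⟨n, f⟩ => by
    choose g hg using fun k => ZMod.intCast_surjective (f k)
    exact ⟨(n, g), Sigma.ext rfl (heq_of_eq (funext hg))⟩
  exact ⟨_, hreduce.comp (invFun_surjective r.injective)⟩

theorem exists_lift_of_forall_extend [LinearOrder L] {t : L → Σ n : ℕ, K × K → ZMod n}
    (ht : Surjective t) (hs : ∀ j, ∃ N, InjOn (uncurry s) (tails (Iio j) N))
    (hz : ∀ i m, (z i m).1 ≠ (z i m).2)
    (hext : ∀ j, (∃ g, IsIntegralLift (fun i : Iio j => s i) (fun i : Iio j => z i) (t j).2 g) →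
      ∃ g, IsIntegralLift s z (t j).2 g)
    [NeZero n] (h : TowerGroup (posIndex s z) (negIndex s z) →+ ZMod n) :
    ∃ f : TowerGroup (posIndex s z) (negIndex s z) →+ ℤ, (Int.castAddHom (ZMod n)).comp f = h := by
  obtain ⟨j, hj⟩ := ht ⟨n, fun k => h (x _ _ k)⟩
  obtain ⟨N, hN⟩ := hs j
  have hextj := hext j
  rw [hj] at hextj
  obtain ⟨g, hg⟩ := hextj (IsIntegralLift.exists_of_injOn_tails hN hz h)
  exact hg.exists_comp_eq

end LiftingConstruction

section MainTheorem

open Cardinal Set TowerGroup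

theorem exists_nonfree_coseparable_general {lam : Cardinal.{0}} (hcof : lam.ord.cof = ℵ₀)
    (hch : 2 ^ lam = Order.succ lam) (hstar : StarPrinciple lam)
    (hsmall : ∀ μ, ℵ₀ ≤ μ → μ < lam → 2 ^ μ < lam) :
    ∃ (G : Type) (_ : AddCommGroup G),
      #G = Order.succ lam ∧
      (∀ S : AddSubgroup G, #S ≤ lam → Module.Free ℤ S) ∧
      ¬ Module.Free ℤ G ∧
      ∀ (n : ℕ) [NeZero n] (h : G →+ ZMod n),
        ∃ g : G →+ ℤ, (Int.castAddHom (ZMod n)).comp g = h := by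
  have hlam : ℵ₀ ≤ lam := hcof ▸ Ordinal.cof_ord_le lam
  have hsucc : lam < Order.succ lam := Order.lt_succ lam
  let K := lam.ord.ToType
  let L := (Order.succ lam).ord.ToType
  have hK : #K = lam := mk_ord_toType lam
  have hL : #L = Order.succ lam := mk_ord_toType _
  have hKK : #(K × K) = lam := by rw [mk_prod, lift_id, hK, mul_eq_self hlam]
  have : Infinite L := infinite_iff.2 (hL ▸ hlam.trans hsucc.le)
  have hIic : ∀ i : L, #(Iic i) ≤ lam := fun i =>
    Order.lt_succ_iff.1 ((mk_Iic_lt i (by simp [L]) (aleph0_le_mk L)).trans_eq hL)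
  obtain ⟨s, hs⟩ := hstar.exists_seq hlam hK hL
  obtain ⟨t, ht⟩ := exists_surjective_sigma_zmod (X := K × K) (L := L) (hKK ▸ hlam)
    (by rw [hKK, hL, hch])
  obtain ⟨z, hz, hext⟩ := exists_columns_extending_lifts hcof hsmall hK.ge hIic s t
  refine ⟨TowerGroup (posIndex s z) (negIndex s z), inferInstance, ?_, fun S hS => ?_, ?_, ?_⟩
  · rw [mk_eq (by rw [hKK, hL]; exact hsucc.le), hL]
  · refine free_addSubgroup_of_mk_le hlam (fun I hI => ?_) S hS
    exact (hs I hI).imp fun N hN => tailSeparated_posIndex_negIndex hN hz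
  · exact not_free_towerGroup (by rwa [hKK, hL]) (by rw [hL]; exact hlam.trans_lt hsucc)
  · exact fun n _ h => exists_lift_of_forall_extend ht
      (fun j => hs _ ((mk_le_mk_of_subset Iio_subset_Iic_self).trans (hIic j))) hz hext h

end MainTheorem

/-- If `λ` has cofinality `ω`, `2^λ = λ⁺`, `*(λ, ℵ₀)` holds and `2^μ < λ` for every
infinite `μ < λ`, then there is a non-free coseparable abelian group of cardinality
`λ⁺`: an `ℵ₁`-free, non-free abelian group `G` with `|G| = λ⁺` such that for every
prime `p` every homomorphism `G → ℤ/pℤ` lifts to `ℤ`. -/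
theorem exists_nonfree_coseparable (lam : Cardinal.{0})
    (hcof : lam.ord.cof = Cardinal.aleph0)
    (hch : 2 ^ lam = Order.succ lam)
    (hstar : StarPrinciple lam)
    (hsmall : ∀ μ : Cardinal.{0}, Cardinal.aleph0 ≤ μ → μ < lam → 2 ^ μ < lam) :
    ∃ (G : Type) (inst : AddCommGroup G),
      Cardinal.mk G = Order.succ lam ∧
      (∀ S : @AddSubgroup G (inst.toAddGroup), Cardinal.mk S < Cardinal.aleph 1 →
        Module.Free ℤ S) ∧
      ¬ Module.Free ℤ G ∧
      (∀ p : ℕ, p.Prime → ∀ h : G →+ ZMod p,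
        ∃ g : G →+ ℤ, (Int.castAddHom (ZMod p)).comp g = h) := by
  have hlam : Cardinal.aleph0 ≤ lam := hcof ▸ Ordinal.cof_ord_le lam
  obtain ⟨G, inst, hcard, hfree, hnot, hlift⟩ :=
    exists_nonfree_coseparable_general hcof hch hstar hsmall
  refine ⟨G, inst, hcard, fun S hS => hfree S ?_, hnot, fun p hp => ?_⟩
  · exact (Order.lt_succ_iff.1 (Cardinal.succ_aleph0 ▸ hS)).trans hlam
  · have : NeZero p := ⟨hp.ne_zero⟩
    exact hlift p
end
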